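/- Fix ī ∈ {0,…,e−1}, let C be a core block and let K = K_ī(C). Suppose that m is a multicore with core block C and weight w(m) = w(C) + hr with 0 ≤ h ≤ K. Then d_ī(m) ≥ K − h. -/

import Mathlib

/-!
Combinatorial framework for multipartitions, residues, β-sets, abacus levels,
weights, hubs, core blocks and Scopes-type moves, following Fayers and the paper.
Rows and columns of Young diagrams are indexed from 0, so the node in row `b`
and column `c` (0-based) of component `j` has residue `a j + c - b` mod `e`.
-/

open scoped Classical

namespace AK

/-- A partition, given by its (antitone, finitely supported) sequence of parts,
rows indexed from `0`. -/
structure PartitionFun : Type where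
  part : ℕ → ℕ
  antitone : Antitone part
  finite_support : ∃ N, ∀ b, N ≤ b → part b = 0

/-- The node in row `b`, column `c` (0-based) belongs to the Young diagram. -/
def PartitionFun.InDiag (lam : PartitionFun) (b c : ℕ) : Prop := c < lam.part b

/-- The node `(b,c)` is removable: deleting it leaves the diagram of a partition. -/
def PartitionFun.Removable (lam : PartitionFun) (b c : ℕ) : Prop :=
  lam.part b = c + 1 ∧ lam.part (b + 1) ≤ c

/-- The node `(b,c)` is addable: adjoining it gives the diagram of a partition. -/
def PartitionFun.Addable (lam : PartitionFun) (b c : ℕ) : Prop :=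
  lam.part b = c ∧ (b = 0 ∨ lam.part b < lam.part (b - 1))

/-- An `r`-multipartition. -/
abbrev Multipartition (r : ℕ) := Fin r → PartitionFun

/-- Nodes: `(b, c, j)` with row `b`, column `c`, component `j`. -/
abbrev Node (r : ℕ) := ℕ × ℕ × Fin r

/-- The Young diagram of a multipartition, as a set of nodes. -/
def diag {r : ℕ} (lam : Multipartition r) : Set (Node r) :=
  {x | (lam x.2.2).InDiag x.1 x.2.1}

/-- The size `n` of a multipartition of `n`. -/
noncomputable def msize {r : ℕ} (lam : Multipartition r) : ℕ :=
  Set.ncard (diag lam)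

/-- `c_i(λ)`: the number of nodes of residue `i` (mod `e`). -/
noncomputable def nodeCount {r : ℕ} (e : ℕ) (a : Fin r → ℤ) (lam : Multipartition r)
    (i : ℤ) : ℕ :=
  Set.ncard {x : Node r | (lam x.2.2).InDiag x.1 x.2.1 ∧
    (a x.2.2 + (x.2.1 : ℤ) - (x.1 : ℤ)) % (e : ℤ) = i % e}

/-- Number of removable nodes of residue `i` in component `j`. -/
noncomputable def removableCount {r : ℕ} (e : ℕ) (a : Fin r → ℤ) (lam : Multipartition r)
    (i : ℤ) (j : Fin r) : ℕ :=
  Set.ncard {p : ℕ × ℕ | (lam j).Removable p.1 p.2 ∧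
    (a j + (p.2 : ℤ) - (p.1 : ℤ)) % (e : ℤ) = i % e}

/-- Number of addable nodes of residue `i` in component `j`. -/
noncomputable def addableCount {r : ℕ} (e : ℕ) (a : Fin r → ℤ) (lam : Multipartition r)
    (i : ℤ) (j : Fin r) : ℕ :=
  Set.ncard {p : ℕ × ℕ | (lam j).Addable p.1 p.2 ∧
    (a j + (p.2 : ℤ) - (p.1 : ℤ)) % (e : ℤ) = i % e}

/-- `δ^j_i(λ)` = (removable `i`-nodes of component `j`) − (addable `i`-nodes of component `j`). -/
noncomputable def delta {r : ℕ} (e : ℕ) (a : Fin r → ℤ) (lam : Multipartition r)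
    (i : ℤ) (j : Fin r) : ℤ :=
  (removableCount e a lam i j : ℤ) - (addableCount e a lam i j : ℤ)

/-- The hub `δ_i(λ) = Σ_j δ^j_i(λ)`. -/
noncomputable def hub {r : ℕ} (e : ℕ) (a : Fin r → ℤ) (lam : Multipartition r) (i : ℤ) : ℤ :=
  ∑ j : Fin r, delta e a lam i j

/-- Two multipartitions have the same hub. -/
def SameHub {r : ℕ} (e : ℕ) (a : Fin r → ℤ) (lam mu : Multipartition r) : Prop :=
  ∀ i : ℤ, hub e a lam i = hub e a mu i

/-- `d_i(m) = min { δ^j_i(m) : 1 ≤ j ≤ r }`. -/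
noncomputable def dmin {r : ℕ} (e : ℕ) (a : Fin r → ℤ) (lam : Multipartition r) (i : ℤ) : ℤ :=
  sInf {x : ℤ | ∃ j : Fin r, delta e a lam i j = x}

/-- The weight `w(λ) = Σ_j c_{a_j}(λ) − (1/2) Σ_{i∈ℤ/eℤ} (c_i(λ) − c_{i+1}(λ))²`. -/
noncomputable def weight {r : ℕ} (e : ℕ) (a : Fin r → ℤ) (lam : Multipartition r) : ℚ :=
  (∑ j : Fin r, (nodeCount e a lam (a j) : ℚ)) -
    (1 / 2 : ℚ) * ∑ i ∈ Finset.range e,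
      ((nodeCount e a lam (i : ℤ) : ℚ) - (nodeCount e a lam ((i : ℤ) + 1) : ℚ)) ^ 2

/-- The β-set `B^j = {λ_b + a_j − b : b ≥ 1}` (here with rows indexed from 0). -/
def betaSet (aj : ℤ) (lam : PartitionFun) : Set ℤ :=
  {x | ∃ b : ℕ, x = (lam.part b : ℤ) + aj - ((b : ℤ) + 1)}

/-- A partition is an `e`-core: `β ∈ B` implies `β − e ∈ B`. -/
def IsECore (e : ℕ) (aj : ℤ) (lam : PartitionFun) : Prop :=
  ∀ x ∈ betaSet aj lam, x - (e : ℤ) ∈ betaSet aj lam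

/-- A multicore: all components are `e`-cores. -/
def IsMulticore {r : ℕ} (e : ℕ) (a : Fin r → ℤ) (lam : Multipartition r) : Prop :=
  ∀ j, IsECore e (a j) (lam j)

/-- `ℓ^a_{ij}(λ)`: the level of the lowest bead on runner `i`, i.e. the largest `x`
with `x·e + i` in the β-set. -/
noncomputable def level (e : ℕ) (aj : ℤ) (lam : PartitionFun) (i : ℕ) : ℤ :=
  sSup {x : ℤ | x * (e : ℤ) + (i : ℤ) ∈ betaSet aj lam}

/-- `γ^{jk}_i(λ) = ℓ^a_{ij}(λ) − ℓ^a_{ik}(λ)`. -/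
noncomputable def gamma {r : ℕ} (e : ℕ) (a : Fin r → ℤ) (lam : Multipartition r)
    (i : ℕ) (j k : Fin r) : ℤ :=
  level e (a j) (lam j) i - level e (a k) (lam k) i

/-- `γ^{jk}_{il}(λ) = γ^{jk}_i(λ) − γ^{jk}_l(λ)`. -/
noncomputable def gammaD {r : ℕ} (e : ℕ) (a : Fin r → ℤ) (lam : Multipartition r)
    (i l : ℕ) (j k : Fin r) : ℤ :=
  gamma e a lam i j k - gamma e a lam l j k

/-- Move a bead from runner `i` to runner `l` in the β-set `S`: replace the largest
element of `S` congruent to `i` mod `e` by the smallest integer congruent to `l`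
mod `e` not in `S`. -/
noncomputable def moveBead (e : ℕ) (i l : ℕ) (S : Set ℤ) : Set ℤ :=
  insert (sInf {x : ℤ | x % (e : ℤ) = (l : ℤ) % e ∧ x ∉ S})
    (S \ {sSup {x : ℤ | x % (e : ℤ) = (i : ℤ) % e ∧ x ∈ S}})

/-- The effect of `s^{jk}_{il}` on the tuple of β-sets: move a bead from runner `i`
to runner `l` in component `j`, and from runner `l` to runner `i` in component `k`. -/
noncomputable def swapSets {r : ℕ} (e i l : ℕ) (j k : Fin r) (S : Fin r → Set ℤ) :
    Fin r → Set ℤ :=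
  Function.update (Function.update S j (moveBead e i l (S j))) k
    (moveBead e l i (Function.update S j (moveBead e i l (S j)) k))

/-- `m' = s^{jk}_{il}(m)`, expressed via β-sets. -/
def IsSwap {r : ℕ} (e : ℕ) (a : Fin r → ℤ) (i l : ℕ) (j k : Fin r)
    (m m' : Multipartition r) : Prop :=
  ∀ j', betaSet (a j') (m' j') = swapSets e i l j k (fun t => betaSet (a t) (m t)) j'

/-- `λ` lies in a core block: its weight is minimal among the weights of all
multipartitions with the same hub. -/
def MinimalWeight {r : ℕ} (e : ℕ) (a : Fin r → ℤ) (lam : Multipartition r) : Prop :=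
  ∀ mu : Multipartition r, SameHub e a lam mu → weight e a lam ≤ weight e a mu

/-- `(b_0,…,b_{e−1})` is a base tuple for `mu` with respect to the multicharge `a'`
(congruent to `a` componentwise mod `e`): each `ℓ^{a'}_{ij}(mu)` is `b i` or `b i + 1`. -/
def IsBaseTuple {r : ℕ} (e : ℕ) (a : Fin r → ℤ) (mu : Multipartition r)
    (a' : Fin r → ℤ) (b : ℕ → ℤ) : Prop :=
  (∀ j, (e : ℤ) ∣ (a' j - a j)) ∧
    ∀ i < e, ∀ j, level e (a' j) (mu j) i = b i ∨ level e (a' j) (mu j) i = b i + 1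

/-- `K_i(C)` for the core block of `mu`: among all base tuples (over all admissible
multicharges), take `b i` maximal and then `b (i−1)` minimal, and set
`K_i = b_i − b_{i−1} − 1` for `i ≠ 0`, `K_0 = b_0 − b_{e−1} − 2`. -/
noncomputable def Kconst {r : ℕ} (e : ℕ) (a : Fin r → ℤ) (mu : Multipartition r)
    (i : ℕ) : ℤ :=
  let Bi : ℤ := sSup {x : ℤ | ∃ a' bt, IsBaseTuple e a mu a' bt ∧ bt i = x}
  let iprev : ℕ := if i = 0 then e - 1 else i - 1
  let Bp : ℤ := sInf {x : ℤ | ∃ a' bt, IsBaseTuple e a mu a' bt ∧ bt i = Bi ∧ bt iprev = x}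
  Bi - Bp - (if i = 0 then 2 else 1)

/-- The map `φ_i : ℤ → ℤ`. -/
def phiMap (e i : ℕ) (x : ℤ) : ℤ :=
  if x % (e : ℤ) = ((i : ℤ) - 1) % e then x + 1
  else if x % (e : ℤ) = (i : ℤ) % e then x - 1
  else x

/-- Lexicographic order on multipartitions: `λ > μ`. -/
def lexGT {r : ℕ} (lam mu : Multipartition r) : Prop :=
  ∃ j : Fin r, (∀ j' < j, (lam j').part = (mu j').part) ∧
    ∃ i : ℕ, (∀ i' < i, (lam j).part i' = (mu j).part i') ∧
      (mu j).part i < (lam j).part i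

/-- `x` is above `y`: `j < j'` or (`j = j'` and `b < b'`). -/
def NodeAbove {r : ℕ} (x y : Node r) : Prop :=
  x.2.2 < y.2.2 ∨ (x.2.2 = y.2.2 ∧ x.1 < y.1)

/-- The order on nodes: `x < y` iff `y` is above `x`. -/
def NodeLT {r : ℕ} (x y : Node r) : Prop := NodeAbove y x

/-- `N_A(λ)` = (addable `i`-nodes of `λ` below `A`) − (removable `i`-nodes of `λ` below `A`). -/
noncomputable def Nfac {r : ℕ} (e : ℕ) (a : Fin r → ℤ) (lam : Multipartition r)
    (i : ℤ) (A : Node r) : ℤ :=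
  (Set.ncard {y : Node r | (lam y.2.2).Addable y.1 y.2.1 ∧
      (a y.2.2 + (y.2.1 : ℤ) - (y.1 : ℤ)) % (e : ℤ) = i % e ∧ NodeAbove A y} : ℤ) -
  (Set.ncard {y : Node r | (lam y.2.2).Removable y.1 y.2.1 ∧
      (a y.2.2 + (y.2.1 : ℤ) - (y.1 : ℤ)) % (e : ℤ) = i % e ∧ NodeAbove A y} : ℤ)

/-- `lam` is obtained from `mu` by adding one `e`-rim hook to some component:
on β-sets, some `β ∈ B^j` with `β + e ∉ B^j` is replaced by `β + e`. -/
def AddRimHook {r : ℕ} (e : ℕ) (a : Fin r → ℤ) (mu lam : Multipartition r) : Prop :=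
  ∃ (j : Fin r) (β : ℤ), β ∈ betaSet (a j) (mu j) ∧ β + (e : ℤ) ∉ betaSet (a j) (mu j) ∧
    betaSet (a j) (lam j) = insert (β + (e : ℤ)) (betaSet (a j) (mu j) \ {β}) ∧
    ∀ j' ≠ j, betaSet (a j') (lam j') = betaSet (a j') (mu j')

/-- The number of inversions (length) of a permutation of `Fin d`. -/
noncomputable def permLength (d : ℕ) (σ : Equiv.Perm (Fin d)) : ℕ :=
  (Finset.univ.filter (fun p : Fin d × Fin d => p.1 < p.2 ∧ σ p.2 < σ p.1)).card

lemma dmin_ge {r : ℕ} (hr : 0 < r) (e : ℕ) (a : Fin r → ℤ) (lam : Multipartition r) (i x : ℤ)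
    (hx : ∀ j, x ≤ delta e a lam i j) : x ≤ dmin e a lam i := by
  unfold dmin
  apply le_csInf
  · exact ⟨_, ⟨0, hr⟩, rfl⟩
  · rintro y ⟨j, rfl⟩
    exact hx j

lemma beta_le (a : ℤ) (lam : PartitionFun) (x : ℤ) (hx : x ∈ betaSet a lam) :
    x ≤ lam.part 0 + a := by
  obtain ⟨b, rfl⟩ := hx
  have := lam.antitone (Nat.zero_le b)
  omega

lemma beta_small (a : ℤ) (lam : PartitionFun) (N : ℕ) (hN : ∀ b, N ≤ b → lam.part b = 0)
    (x : ℤ) (hx : x < a - N) : x ∈ betaSet a lam := by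
  refine ⟨(a - 1 - x).toNat, ?_⟩
  rw [hN _ (by omega)]
  omega

lemma core_sub (e : ℕ) (a : ℤ) (lam : PartitionFun) (hc : IsECore e a lam) (x : ℤ)
    (hx : x ∈ betaSet a lam) (n : ℕ) : x - n * (e : ℤ) ∈ betaSet a lam := by
  induction n with
  | zero => simpa using hx
  | succ n ih =>
    have := hc _ ih
    convert this using 1
    push_cast; ring

lemma mem_iff_level {e : ℕ} (he : 2 ≤ e) (a : ℤ) (lam : PartitionFun) (hc : IsECore e a lam)
    (i : ℕ) (q : ℤ) : q * (e : ℤ) + i ∈ betaSet a lam ↔ q ≤ level e a lam i := by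
  have hbdd : BddAbove {x : ℤ | x * (e : ℤ) + (i : ℤ) ∈ betaSet a lam} := by
    refine ⟨max 0 (lam.part 0 + a), ?_⟩
    intro x hx
    have := beta_le a lam _ hx
    by_contra hlt
    push Not at hlt
    have h1 := (max_lt_iff.1 hlt)
    have : x * 1 ≤ x * (e : ℤ) := mul_le_mul_of_nonneg_left (by omega) (by omega)
    omega
  have hne : {x : ℤ | x * (e : ℤ) + (i : ℤ) ∈ betaSet a lam}.Nonempty := by
    obtain ⟨N, hN⟩ := lam.finite_support
    refine ⟨-(N + |a| + i + 1), ?_⟩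
    apply beta_small a lam N hN
    have h0 : 0 ≤ (N + |a| + i + 1 : ℤ) := by positivity
    have : (N + |a| + i + 1 : ℤ) * 1 ≤ (N + |a| + i + 1) * (e : ℤ) :=
      mul_le_mul_of_nonneg_left (by omega) h0
    have := neg_abs_le a
    linarith
  constructor
  · intro h
    exact le_csSup hbdd h
  · intro h
    have hm := Int.csSup_mem hne hbdd
    have hm' : level e a lam i * (e : ℤ) + i ∈ betaSet a lam := hm
    have := core_sub e a lam hc _ hm' (level e a lam i - q).toNat
    convert this using 1
    rw [Int.toNat_of_nonneg (by omega)]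
    ring

lemma level_shift {e : ℕ} (he : 2 ≤ e) (a t : ℤ) (lam : PartitionFun) (hc : IsECore e a lam)
    (i : ℕ) : level e (a + e * t) lam i = level e a lam i + t := by
  have key : ∀ x, x ∈ betaSet (a + e * t) lam ↔ x - e * t ∈ betaSet a lam := by
    intro x
    constructor
    · rintro ⟨b, rfl⟩; exact ⟨b, by ring⟩
    · rintro ⟨b, hb⟩; exact ⟨b, by linarith⟩
  have hc' : IsECore e (a + e * t) lam := by
    intro x hx
    rw [key] at hx ⊢
    have := hc _ hx
    convert this using 1
    ring
  have hh : ∀ q, q ≤ level e (a + e * t) lam i ↔ q ≤ level e a lam i + t := by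
    intro q
    rw [← mem_iff_level he _ _ hc', key]
    have : q * (e : ℤ) + i - e * t = (q - t) * (e : ℤ) + i := by ring
    rw [this, mem_iff_level he _ _ hc]
    omega
  exact le_antisymm ((hh _).1 le_rfl) ((hh _).2 le_rfl)

/-- level of the neighbour runner, shifted so as to be comparable. -/
noncomputable def pl (e : ℕ) (a : ℤ) (lam : PartitionFun) (i : ℕ) : ℤ :=
  if i = 0 then level e a lam (e - 1) + 1 else level e a lam (i - 1)

lemma mem_iff_pl {e : ℕ} (he : 2 ≤ e) (a : ℤ) (lam : PartitionFun) (hc : IsECore e a lam)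
    (i : ℕ) (q : ℤ) : q * (e : ℤ) + i - 1 ∈ betaSet a lam ↔ q ≤ pl e a lam i := by
  unfold pl
  split_ifs with h
  · subst h
    have : q * (e : ℤ) + (0 : ℕ) - 1 = (q - 1) * (e : ℤ) + (e - 1 : ℕ) := by
      push_cast [show 1 ≤ e by omega]; ring
    rw [this, mem_iff_level he _ _ hc]; omega
  · have : q * (e : ℤ) + i - 1 = q * (e : ℤ) + (i - 1 : ℕ) := by
      push_cast [show 1 ≤ i by omega]; ring
    rw [this, mem_iff_level he _ _ hc]

lemma beta_strict (lam : PartitionFun) (b b' : ℕ) (h : b < b') (a : ℤ) :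
    (lam.part b' : ℤ) + a - (b' + 1) < lam.part b + a - (b + 1) := by
  have := lam.antitone h.le
  omega

lemma beta_inj (lam : PartitionFun) (b b' : ℕ) (a : ℤ)
    (h : (lam.part b' : ℤ) + a - (b' + 1) = lam.part b + a - (b + 1)) : b = b' := by
  rcases lt_trichotomy b b' with h1 | h1 | h1
  · have := beta_strict lam b b' h1 a; omega
  · exact h1
  · have := beta_strict lam b' b h1 a; omega

lemma ncard_runner {e : ℕ} (he : 2 ≤ e) (i : ℕ) (u v : ℤ) :
    Set.ncard {x : ℤ | x % (e : ℤ) = (i : ℤ) % e ∧ ∃ q, x = q * (e : ℤ) + i ∧ q ≤ u ∧ ¬ q ≤ v}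
      = (u - v).toNat := by
  have : {x : ℤ | x % (e : ℤ) = (i : ℤ) % e ∧ ∃ q, x = q * (e : ℤ) + i ∧ q ≤ u ∧ ¬ q ≤ v}
      = (fun q : ℤ => q * (e : ℤ) + i) '' (Finset.Ioc v u : Finset ℤ) := by
    ext x
    simp only [Set.mem_setOf_eq, Set.mem_image, Finset.coe_Ioc, Set.mem_Ioc]
    constructor
    · rintro ⟨_, q, rfl, h1, h2⟩
      exact ⟨q, ⟨by omega, h1⟩, rfl⟩
    · rintro ⟨q, ⟨h1, h2⟩, rfl⟩
      refine ⟨by simp, q, rfl, h2, by omega⟩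
  rw [this, Set.ncard_image_of_injective, Set.ncard_coe_finset, Int.card_Ioc]
  intro p q h
  have h' : p * (e : ℤ) = q * (e : ℤ) := by simpa using h
  exact mul_right_cancel₀ (by omega) h'

lemma exists_q {e : ℕ} (i : ℕ) (x : ℤ) (h : x % (e : ℤ) = (i : ℤ) % e) :
    ∃ q : ℤ, x = q * (e : ℤ) + i := by
  have := Int.emod_emod_of_dvd
  have hd : (e : ℤ) ∣ x - i := Int.ModEq.dvd (Int.ModEq.symm h)
  obtain ⟨q, hq⟩ := hd
  exact ⟨q, by linarith⟩

lemma delta_eq {e r : ℕ} (he : 2 ≤ e) (a : Fin r → ℤ) (lam : Multipartition r)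
    (hc : IsMulticore e a lam) (i : ℕ) (j : Fin r) :
    delta e a lam i j = level e (a j) (lam j) i - pl e (a j) (lam j) i := by
  have h1 : removableCount e a lam i j
      = (level e (a j) (lam j) i - pl e (a j) (lam j) i).toNat := by
    rw [← ncard_runner he i]
    unfold removableCount
    refine Set.ncard_congr (fun p _ => a j + (p.2 : ℤ) - (p.1 : ℤ)) ?_ ?_ ?_
    · rintro ⟨b, c⟩ ⟨⟨hp, hp2⟩, hres⟩
      refine ⟨hres, ?_⟩
      obtain ⟨q, hq⟩ := exists_q i _ hres
      refine ⟨q, hq, ?_, ?_⟩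
      · rw [← mem_iff_level he _ _ (hc j), ← hq]
        refine ⟨b, ?_⟩
        simp only at hp hp2 ⊢
        omega
      · rw [← mem_iff_pl he _ _ (hc j), ← hq]
        rintro ⟨b', hb'⟩
        simp only at hp hp2 hb'
        rcases Nat.lt_or_ge b b' with h | h
        · have := (lam j).antitone (show b + 1 ≤ b' from h)
          omega
        · have := (lam j).antitone h
          omega
    · rintro ⟨b, c⟩ ⟨b', c'⟩ ⟨⟨hp, hp2⟩, -⟩ ⟨⟨hp', hp2'⟩, -⟩ heq
      simp only at hp hp2 hp' hp2' heq
      have hb : b = b' := by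
        apply beta_inj (lam j) b b' (a j)
        omega
      subst hb
      simp only [Prod.mk.injEq, true_and]; omega
    · rintro x ⟨hres, q, rfl, hq1, hq2⟩
      rw [← mem_iff_level he _ _ (hc j)] at hq1
      rw [← mem_iff_pl he _ _ (hc j)] at hq2
      obtain ⟨b, hb⟩ := hq1
      have hpos : 1 ≤ (lam j).part b ∧ (lam j).part (b + 1) < (lam j).part b := by
        have hlt : (lam j).part (b + 1) < (lam j).part b := by
          by_contra hcon
          have := (lam j).antitone (show b ≤ b + 1 by omega)
          apply hq2
          refine ⟨b + 1, ?_⟩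
          rw [hb]; push_cast; omega
        omega
      have hE : a j + (((lam j).part b - 1 : ℕ) : ℤ) - (b : ℤ) = q * e + i := by omega
      refine ⟨(b, (lam j).part b - 1), ⟨⟨?_, ?_⟩, ?_⟩, ?_⟩
      · simp only; omega
      · simp only; omega
      · simp only; rw [hE]; exact hres
      · exact hE
  have h2 : addableCount e a lam i j
      = (pl e (a j) (lam j) i - level e (a j) (lam j) i).toNat := by
    rw [← ncard_runner he i]
    unfold addableCount
    refine Set.ncard_congr (fun p _ => a j + (p.2 : ℤ) - (p.1 : ℤ)) ?_ ?_ ?_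
    · rintro ⟨b, c⟩ ⟨⟨hp, hp2⟩, hres⟩
      refine ⟨hres, ?_⟩
      obtain ⟨q, hq⟩ := exists_q i _ hres
      refine ⟨q, hq, ?_, ?_⟩
      · rw [← mem_iff_pl he _ _ (hc j), ← hq]
        refine ⟨b, ?_⟩
        simp only at hp hp2 ⊢
        omega
      · rw [← mem_iff_level he _ _ (hc j), ← hq]
        rintro ⟨b', hb'⟩
        simp only at hp hp2 hb'
        rcases Nat.lt_or_ge b' b with h | h
        · have := (lam j).antitone (show b' ≤ b - 1 by omega)
          omega
        · have := (lam j).antitone h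
          omega
    · rintro ⟨b, c⟩ ⟨b', c'⟩ ⟨⟨hp, hp2⟩, -⟩ ⟨⟨hp', hp2'⟩, -⟩ heq
      simp only at hp hp2 hp' hp2' heq
      have hb : b = b' := by
        apply beta_inj (lam j) b b' (a j)
        omega
      subst hb
      simp only [Prod.mk.injEq, true_and]; omega
    · rintro x ⟨hres, q, rfl, hq1, hq2⟩
      rw [← mem_iff_level he _ _ (hc j)] at hq2
      rw [← mem_iff_pl he _ _ (hc j)] at hq1
      obtain ⟨b, hb⟩ := hq1
      have hE : a j + (((lam j).part b : ℕ) : ℤ) - (b : ℤ) = q * e + i := by omega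
      refine ⟨(b, (lam j).part b), ⟨⟨rfl, ?_⟩, ?_⟩, hE⟩
      · simp only
        by_contra hcon
        push Not at hcon
        have := (lam j).antitone (show b - 1 ≤ b by omega)
        apply hq2
        refine ⟨b - 1, ?_⟩
        omega
      · simp only; rw [hE]; exact hres
  unfold delta
  rw [h1, h2]
  omega

lemma floor_step {e : ℕ} (he : 2 ≤ e) (y : ℤ) :
    y / (e : ℤ) - (y - 1) / (e : ℤ) = if y % (e : ℤ) = 0 then 1 else 0 := by
  have he' : (0 : ℤ) < e := by omega
  split_ifs with h
  · obtain ⟨q, rfl⟩ := Int.dvd_of_emod_eq_zero h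
    rw [Int.mul_ediv_cancel_left _ he'.ne']
    have : ((e : ℤ) * q - 1) / e = q - 1 := by
      rw [Int.ediv_eq_iff_of_pos he']
      constructor <;> nlinarith
    omega
  · have h1 := Int.emod_nonneg y he'.ne'
    have h2 := Int.emod_lt_of_pos y he'
    have h3 := Int.mul_ediv_add_emod y e
    have : (y - 1) / (e : ℤ) = y / e := by
      rw [Int.ediv_eq_iff_of_pos he']
      constructor
      · have : 1 ≤ y % (e : ℤ) := by omega
        linarith
      · linarith
    omega

lemma row_count {e : ℕ} (he : 2 ≤ e) (z i : ℤ) (n : ℕ) :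
    (∑ c ∈ Finset.range n, if (z + (c : ℤ)) % (e : ℤ) = i % e then (1 : ℤ) else 0)
      = (z + n - 1 - i) / (e : ℤ) - (z - 1 - i) / (e : ℤ) := by
  induction n with
  | zero => simp
  | succ n ih =>
    rw [Finset.sum_range_succ, ih]
    have := floor_step he (z + n - i)
    have h3 : (z + (n : ℤ)) % (e : ℤ) = i % e ↔ (z + n - i) % (e : ℤ) = 0 :=
      Int.emod_eq_emod_iff_emod_sub_eq_zero
    simp only [h3]
    rw [← this]
    push_cast
    have e1 : z + ((n : ℤ) + 1) - 1 - i = z + n - i := by ring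
    have e2 : z + (n : ℤ) - 1 - i = z + n - i - 1 := by ring
    rw [e1, e2]; ring

lemma nodeCount_eq {e r : ℕ} (he : 2 ≤ e) (a : Fin r → ℤ) (lam : Multipartition r) (i : ℤ)
    (N : Fin r → ℕ) (hN : ∀ j b, N j ≤ b → (lam j).part b = 0) :
    (nodeCount e a lam i : ℤ) = ∑ j, ∑ b ∈ Finset.range (N j),
      ((((lam j).part b : ℤ) + a j - (b + 1) - i) / (e : ℤ) - (a j - (b + 1) - i) / (e : ℤ)) := by
  have hset : {x : Node r | (lam x.2.2).InDiag x.1 x.2.1 ∧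
      (a x.2.2 + (x.2.1 : ℤ) - (x.1 : ℤ)) % (e : ℤ) = i % e} =
      (fun p : (_ : (_ : Fin r) × ℕ) × ℕ => ((p.1.2, p.2, p.1.1) : Node r)) ''
      (((((Finset.univ : Finset (Fin r)).sigma (fun j => Finset.range (N j))).sigma
        (fun p => (Finset.range ((lam p.1).part p.2)).filter
          (fun c => (a p.1 - (p.2 : ℤ) + (c : ℤ)) % (e : ℤ) = i % e))) :
          Finset ((_ : (_ : Fin r) × ℕ) × ℕ)) : Set _) := by
    ext ⟨b, c, j⟩
    simp only [Set.mem_setOf_eq, Set.mem_image, Finset.coe_sigma, Set.mem_sigma_iff,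
      Finset.mem_coe, Finset.mem_univ, Finset.mem_range, Finset.mem_filter, true_and]
    constructor
    · rintro ⟨h1, h2⟩
      refine ⟨⟨⟨j, b⟩, c⟩, ⟨?_, h1, ?_⟩, rfl⟩
      · by_contra hcon
        have := hN j b (by simpa using hcon)
        unfold PartitionFun.InDiag at h1
        omega
      · rw [← h2]; congr 1; ring
    · rintro ⟨⟨⟨j', b'⟩, c'⟩, ⟨h0, h1, h2⟩, h3⟩
      simp only [Prod.mk.injEq] at h3
      obtain ⟨rfl, rfl, rfl⟩ := h3
      refine ⟨h1, ?_⟩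
      rw [← h2]; congr 1; simp only; ring
  unfold nodeCount
  rw [hset, Set.ncard_image_of_injective, Set.ncard_coe_finset, Finset.card_sigma,
    Finset.sum_sigma]
  · push_cast
    refine Finset.sum_congr rfl fun j _ => Finset.sum_congr rfl fun b _ => ?_
    rw [Finset.card_filter]
    push_cast
    rw [row_count he]
    congr 2 <;> ring
  · rintro ⟨⟨j', b'⟩, c'⟩ ⟨⟨j, b⟩, c⟩ h3
    simp only [Prod.mk.injEq] at h3
    obtain ⟨rfl, rfl, rfl⟩ := h3
    rfl

lemma sum_beads {e : ℕ} (he : 2 ≤ e) (a M : ℤ) (N : ℕ) (lam : PartitionFun)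
    (hc : IsECore e a lam) (hN : ∀ b, N ≤ b → lam.part b = 0) (hM : a - N = M * e)
    (F : ℤ → ℤ) :
    ∑ b ∈ Finset.range N, F ((lam.part b : ℤ) + a - (b + 1))
      = ∑ i ∈ Finset.range e, ∑ q ∈ Finset.Icc M (level e a lam i), F (q * e + i) := by
  have he' : (0 : ℤ) < e := by omega
  rw [Finset.sum_sigma']
  have hinj : Set.InjOn (fun b : ℕ => (lam.part b : ℤ) + a - (b + 1)) (Finset.range N) := by
    intro b _ b' _ h
    exact beta_inj lam b b' a h.symm
  rw [← Finset.sum_image (f := F) hinj]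
  symm
  refine Finset.sum_bij (fun p _ => p.2 * (e : ℤ) + p.1) ?_ ?_ ?_ ?_
  · rintro ⟨i, q⟩ h
    simp only [Finset.mem_sigma, Finset.mem_range, Finset.mem_Icc] at h
    obtain ⟨hi, h1, h2⟩ := h
    rw [← mem_iff_level he _ _ hc] at h2
    obtain ⟨b, hb⟩ := h2
    simp only [Finset.mem_image, Finset.mem_range]
    refine ⟨b, ?_, hb.symm⟩
    by_contra hcon
    have h0 := hN b (by omega)
    have : M * (e : ℤ) ≤ q * e := mul_le_mul_of_nonneg_right h1 he'.le
    omega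
  · rintro ⟨i, q⟩ h ⟨i', q'⟩ h' heq
    simp only [Finset.mem_sigma, Finset.mem_range, Finset.mem_Icc] at h h' heq
    have e1 : (q * (e : ℤ) + i) % e = i := by
      rw [Int.add_comm, Int.add_mul_emod_self_right]
      exact Int.emod_eq_of_lt (by omega) (by omega)
    have e2 : (q' * (e : ℤ) + i') % e = i' := by
      rw [Int.add_comm, Int.add_mul_emod_self_right]
      exact Int.emod_eq_of_lt (by omega) (by omega)
    have hi : i = i' := by
      rw [heq, e2] at e1; omega
    subst hi
    have : q * (e : ℤ) = q' * e := by linarith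
    have := mul_right_cancel₀ he'.ne' this
    subst this; rfl
  · intro x hx
    simp only [Finset.mem_image, Finset.mem_range] at hx
    obtain ⟨b, hb, rfl⟩ := hx
    set x : ℤ := (lam.part b : ℤ) + a - (b + 1) with hxdef
    have h1 := Int.emod_nonneg x he'.ne'
    have h2 := Int.emod_lt_of_pos x he'
    have h3 := Int.ediv_mul_add_emod x e
    have h4 : ((x % (e : ℤ)).toNat : ℤ) = x % e := Int.toNat_of_nonneg h1
    refine ⟨⟨(x % (e : ℤ)).toNat, x / e⟩, ?_, ?_⟩
    · simp only [Finset.mem_sigma, Finset.mem_range, Finset.mem_Icc]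
      refine ⟨by omega, ?_, ?_⟩
      · rw [Int.le_ediv_iff_mul_le he', ← hM]; omega
      · rw [← mem_iff_level he _ _ hc, h4, h3]
        exact ⟨b, hxdef⟩
    · simp only [h4, h3]
  · intros; rfl

lemma sum_Icc_lin (M L d : ℤ) (h : M - 1 ≤ L) :
    2 * ∑ q ∈ Finset.Icc M L, (q - d) = L ^ 2 + L - (M ^ 2 - M) - 2 * d * (L - M + 1) := by
  induction L, h using Int.leInduction with
  | base => rw [Finset.Icc_eq_empty (by omega)]; simp; ring
  | succ L hL ih =>
    have : Finset.Icc M (L + 1) = insert (L + 1) (Finset.Icc M L) := by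
      ext x; simp only [Finset.mem_Icc, Finset.mem_insert]; omega
    rw [this, Finset.sum_insert (by simp), mul_add, ih]
    ring

lemma exists_NM {e : ℕ} (he : 2 ≤ e) (a : ℤ) (l1 l2 : PartitionFun) : ∃ (N : ℕ) (M : ℤ),
    (∀ b, N ≤ b → l1.part b = 0) ∧ (∀ b, N ≤ b → l2.part b = 0) ∧ a - N = M * e := by
  obtain ⟨N1, h1⟩ := l1.finite_support
  obtain ⟨N2, h2⟩ := l2.finite_support
  have habs := neg_abs_le a
  have h0 := abs_nonneg a
  have hm : (N1 + N2 + |a|) * 1 ≤ (N1 + N2 + |a|) * (e : ℤ) :=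
    mul_le_mul_of_nonneg_left (by omega) (by omega)
  refine ⟨(a + (N1 + N2 + |a|) * (e : ℤ)).toNat, -(N1 + N2 + |a|), ?_, ?_, ?_⟩
  · intro b hb; apply h1; omega
  · intro b hb; apply h2; omega
  · rw [Int.toNat_of_nonneg (by omega)]; ring

lemma level_ge {e : ℕ} (he : 2 ≤ e) (a M : ℤ) (N : ℕ) (lam : PartitionFun)
    (hc : IsECore e a lam) (hN : ∀ b, N ≤ b → lam.part b = 0) (hM : a - N = M * e)
    (i : ℕ) (hi : i < e) : M - 1 ≤ level e a lam i := by
  rw [← mem_iff_level he _ _ hc]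
  apply beta_small a lam N hN
  rw [hM]
  have : (M - 1) * (e : ℤ) = M * e - e := by ring
  omega

lemma col_sum {e : ℕ} (he : 2 ≤ e) (a : ℤ) (l1 l2 : PartitionFun)
    (h1 : IsECore e a l1) (h2 : IsECore e a l2) :
    ∑ i ∈ Finset.range e, level e a l1 i = ∑ i ∈ Finset.range e, level e a l2 i := by
  obtain ⟨N, M, hN1, hN2, hM⟩ := exists_NM he a l1 l2
  have key : ∀ l : PartitionFun, IsECore e a l → (∀ b, N ≤ b → l.part b = 0) →
      (N : ℤ) = ∑ i ∈ Finset.range e, (level e a l i - M + 1) := by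
    intro l hc hN
    have := sum_beads he a M N l hc hN hM (fun _ => 1)
    simp only [Finset.sum_const, Finset.card_range, Int.card_Icc, nsmul_eq_mul, mul_one] at this
    rw [this]
    refine Finset.sum_congr rfl fun i hi => ?_
    have := level_ge he a M N l hc hN hM i (Finset.mem_range.1 hi)
    rw [Int.toNat_of_nonneg (by omega)]; ring
  have k1 := key l1 h1 hN1
  have k2 := key l2 h2 hN2
  rw [k1] at k2
  simp only [Finset.sum_add_distrib, Finset.sum_sub_distrib] at k2
  linarith

lemma row_sum {e r : ℕ} (he : 2 ≤ e) (a : Fin r → ℤ) (m m' : Multipartition r)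
    (hm : IsMulticore e a m) (hm' : IsMulticore e a m') (hs : SameHub e a m m')
    (i : ℕ) (hi : i < e) :
    ∑ j, (level e (a j) (m j) i - level e (a j) (m' j) i) = 0 := by
  set R : ℕ → ℤ := fun i => ∑ j, (level e (a j) (m j) i - level e (a j) (m' j) i) with hR
  have hstep : ∀ i, R (i + 1) = R i := by
    intro i
    have := hs ((i + 1 : ℕ) : ℤ)
    unfold hub at this
    simp only [delta_eq he a m hm, delta_eq he a m' hm'] at this
    simp only [pl, Nat.add_eq_zero_iff, one_ne_zero, and_false, if_false, Nat.add_sub_cancel,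
      Finset.sum_sub_distrib] at this
    simp only [hR, Finset.sum_sub_distrib]
    linarith
  have hconst : ∀ i, R i = R 0 := by
    intro i
    induction i with
    | zero => rfl
    | succ n ih => rw [hstep, ih]
  have htot : ∑ i ∈ Finset.range e, R i = 0 := by
    simp only [hR]
    rw [Finset.sum_comm]
    apply Finset.sum_eq_zero
    intro j _
    rw [Finset.sum_sub_distrib, col_sum he (a j) (m j) (m' j) (hm j) (hm' j)]
    ring
  have : (e : ℤ) * R 0 = 0 := by
    rw [← htot, Finset.sum_congr rfl (fun i _ => hconst i)]
    simp
  have h0 : R 0 = 0 := by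
    rcases mul_eq_zero.1 this with h | h
    · omega
    · exact h
  have := hconst i
  rw [h0] at this
  exact this

lemma nodeCount_diff {e r : ℕ} (he : 2 ≤ e) (a : Fin r → ℤ) (m m' : Multipartition r)
    (hm : IsMulticore e a m) (hm' : IsMulticore e a m') (hs : SameHub e a m m')
    (k : ℕ) (hk : k < e) :
    2 * ((nodeCount e a m k : ℤ) - nodeCount e a m' k) =
      ∑ i ∈ Finset.range e, ∑ j,
        ((level e (a j) (m j) i) ^ 2 - (level e (a j) (m' j) i) ^ 2) := by
  have he' : (0 : ℤ) < e := by omega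
  choose N M hN1 hN2 hM using fun j => exists_NM he (a j) (m j) (m' j)
  have hfl : ∀ (q : ℤ) (i : ℕ), i < e →
      (q * (e : ℤ) + i - k) / (e : ℤ) = q - (if i < k then 1 else 0) := by
    intro q i hi
    rw [Int.ediv_eq_iff_of_pos he']
    split_ifs
    · constructor
      · have : (q - 1) * (e : ℤ) = q * e - e := by ring
        omega
      · have : (q - 1 + 1) * (e : ℤ) = q * e := by ring
        have : (q - 1) * (e : ℤ) = q * e - e := by ring
        omega
    · constructor
      · have : (q - 0) * (e : ℤ) = q * e := by ring
        omega
      · have : (q - 0 + 1) * (e : ℤ) = q * e + e := by ring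
        have : (q - 0) * (e : ℤ) = q * e := by ring
        omega
  have comp : ∀ (l : Multipartition r) (j : Fin r), IsECore e (a j) (l j) →
      (∀ b, N j ≤ b → (l j).part b = 0) →
      2 * ∑ b ∈ Finset.range (N j), (((l j).part b : ℤ) + a j - (b + 1) - k) / (e : ℤ) =
      ∑ i ∈ Finset.range e, ((level e (a j) (l j) i) ^ 2 + (level e (a j) (l j) i)
        - ((M j) ^ 2 - M j) - 2 * (if i < k then 1 else 0) * (level e (a j) (l j) i - M j + 1)) := by
    intro l j hc hN
    rw [sum_beads he (a j) (M j) (N j) (l j) hc hN (hM j) (fun x => (x - k) / (e : ℤ)),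
      Finset.mul_sum]
    refine Finset.sum_congr rfl fun i hi => ?_
    have hi' := Finset.mem_range.1 hi
    rw [← sum_Icc_lin _ _ _ (level_ge he (a j) (M j) (N j) (l j) hc hN (hM j) i hi')]
    congr 1
    exact Finset.sum_congr rfl fun q _ => hfl q i hi'
  rw [nodeCount_eq he a m k N hN1, nodeCount_eq he a m' k N hN2, ← Finset.sum_sub_distrib,
    Finset.mul_sum]
  have h1 : ∀ j ∈ (Finset.univ : Finset (Fin r)),
      2 * (∑ b ∈ Finset.range (N j), ((((m j).part b : ℤ) + a j - (b + 1) - k) / (e : ℤ)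
          - (a j - (b + 1) - k) / (e : ℤ))
        - ∑ b ∈ Finset.range (N j), ((((m' j).part b : ℤ) + a j - (b + 1) - k) / (e : ℤ)
          - (a j - (b + 1) - k) / (e : ℤ))) =
      ∑ i ∈ Finset.range e, (((level e (a j) (m j) i) ^ 2 - (level e (a j) (m' j) i) ^ 2)
        + (1 - 2 * (if i < k then 1 else 0)) *
          (level e (a j) (m j) i - level e (a j) (m' j) i)) := by
    intro j _
    have c1 := comp m j (hm j) (hN1 j)
    have c2 := comp m' j (hm' j) (hN2 j)
    rw [Finset.sum_sub_distrib, Finset.sum_sub_distrib]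
    have : ∀ x y z : ℤ, 2 * (x - z - (y - z)) = 2 * x - 2 * y := by intros; ring
    rw [this, c1, c2, ← Finset.sum_sub_distrib]
    refine Finset.sum_congr rfl fun i _ => ?_
    ring
  rw [Finset.sum_congr rfl h1, Finset.sum_comm]
  refine Finset.sum_congr rfl fun i hi => ?_
  rw [Finset.sum_add_distrib, ← Finset.mul_sum,
    row_sum he a m m' hm hm' hs i (Finset.mem_range.1 hi)]
  ring

lemma nodeCount_mod {e r : ℕ} (a : Fin r → ℤ) (m : Multipartition r) (k : ℤ) :
    nodeCount e a m k = nodeCount e a m (k % e) := by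
  unfold nodeCount
  rw [Int.emod_emod_of_dvd _ (dvd_refl _)]

lemma weight_diff {e r : ℕ} (he : 2 ≤ e) (hr : 0 < r) (a : Fin r → ℤ) (m m' : Multipartition r)
    (hm : IsMulticore e a m) (hm' : IsMulticore e a m') (hs : SameHub e a m m') (h : ℤ)
    (hw : weight e a m = weight e a m' + (h : ℚ) * (r : ℚ)) :
    2 * h = ∑ i ∈ Finset.range e, ∑ j,
        ((level e (a j) (m j) i) ^ 2 - (level e (a j) (m' j) i) ^ 2) := by
  have he' : (0 : ℤ) < e := by omega
  have hd := nodeCount_diff he a m m' hm hm' hs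
  have hall : ∀ k : ℤ, 2 * ((nodeCount e a m k : ℤ) - nodeCount e a m' k) =
      2 * ((nodeCount e a m (0 : ℕ) : ℤ) - nodeCount e a m' (0 : ℕ)) := by
    intro k
    rw [nodeCount_mod a m k, nodeCount_mod a m' k]
    have h1 := Int.emod_nonneg k he'.ne'
    have h2 := Int.emod_lt_of_pos k he'
    have h4 : ((k % (e : ℤ)).toNat : ℤ) = k % e := Int.toNat_of_nonneg h1
    rw [← h4, hd _ (by omega), hd 0 (by omega)]
  rw [← hd 0 (by omega)]
  set T : ℤ := (nodeCount e a m (0 : ℕ) : ℤ) - nodeCount e a m' (0 : ℕ) with hT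
  have hall' : ∀ k : ℤ, (nodeCount e a m k : ℚ) = nodeCount e a m' k + T := by
    intro k
    have := hall k
    have h2 : (nodeCount e a m k : ℤ) = nodeCount e a m' k + T := by linarith
    exact_mod_cast h2
  unfold weight at hw
  simp only [hall'] at hw
  have hsq : ∀ x y t : ℚ, (x + t) - (y + t) = x - y := by intros; ring
  simp only [hsq, Finset.sum_add_distrib, Finset.sum_const, Finset.card_univ, Fintype.card_fin,
    nsmul_eq_mul] at hw
  have hr' : (r : ℚ) ≠ 0 := by positivity
  have : (r : ℚ) * T = r * h := by linarith
  have := mul_left_cancel₀ hr' this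
  have : T = h := by exact_mod_cast this
  rw [this]

lemma main_bound {e r : ℕ} (he : 2 ≤ e) (hr : 0 < r) (a : Fin r → ℤ)
    (i p : ℕ) (hi : i < e) (hp : p < e) (hip : i ≠ p)
    (m m' : Multipartition r) (hm : IsMulticore e a m) (hm' : IsMulticore e a m')
    (hs : SameHub e a m m') (h : ℤ)
    (hw : weight e a m = weight e a m' + (h : ℚ) * (r : ℚ))
    (a' : Fin r → ℤ) (b : ℕ → ℤ) (hb : IsBaseTuple e a m' a' b) (j : Fin r) :
    b i - b p - 1 - h ≤ level e (a j) (m j) i - level e (a j) (m j) p := by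
  obtain ⟨hdvd, hlev⟩ := hb
  choose s hs' using hdvd
  have hlev' : ∀ i < e, ∀ j, level e (a j) (m' j) i + s j = b i ∨
      level e (a j) (m' j) i + s j = b i + 1 := by
    intro i hi j
    have := hlev i hi j
    rwa [show a' j = a j + e * s j by linarith [hs' j], level_shift he _ _ _ (hm' j)] at this
  have hwd := weight_diff he hr a m m' hm hm' hs h hw
  set x : ℕ → Fin r → ℤ := fun i j => level e (a j) (m j) i + s j - b i with hx
  have key : 2 * h = ∑ i ∈ Finset.range e, ∑ j, (x i j) * (x i j - 1) := by
    have e1 : ∀ i ∈ Finset.range e, ∑ j, (x i j) * (x i j - 1) =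
        ∑ j, (((level e (a j) (m j) i) ^ 2 - (level e (a j) (m' j) i) ^ 2)
          + 2 * s j * (level e (a j) (m j) i - level e (a j) (m' j) i)) := by
      intro i hi
      have hrow := row_sum he a m m' hm hm' hs i (Finset.mem_range.1 hi)
      have e2 : ∑ j, (x i j) * (x i j - 1) =
        ∑ j, ((((level e (a j) (m j) i) ^ 2 - (level e (a j) (m' j) i) ^ 2)
          + 2 * s j * (level e (a j) (m j) i - level e (a j) (m' j) i))
          + (- 2 * b i - 1) * (level e (a j) (m j) i - level e (a j) (m' j) i)) := by
        refine Finset.sum_congr rfl fun j _ => ?_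
        have hz : (level e (a j) (m' j) i + s j - b i) *
            (level e (a j) (m' j) i + s j - b i - 1) = 0 := by
          rcases hlev' i (Finset.mem_range.1 hi) j with h | h <;> rw [h] <;> ring
        simp only [hx]
        linear_combination hz
      rw [e2, Finset.sum_add_distrib, ← Finset.mul_sum, hrow]
      ring
    rw [Finset.sum_congr rfl e1]
    simp only [Finset.sum_add_distrib]
    rw [← hwd]
    have : ∑ i ∈ Finset.range e, ∑ j,
        2 * s j * (level e (a j) (m j) i - level e (a j) (m' j) i) = 0 := by
      rw [Finset.sum_comm]
      apply Finset.sum_eq_zero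
      intro j _
      rw [← Finset.mul_sum, Finset.sum_sub_distrib,
        col_sum he (a j) (m j) (m' j) (hm j) (hm' j)]
      ring
    rw [this]; ring
  have hnn : ∀ y : ℤ, 0 ≤ y * (y - 1) := by
    intro y
    rcases le_or_gt y 0 with h | h
    · nlinarith
    · nlinarith
  have hge : x i j * (x i j - 1) + x p j * (x p j - 1) ≤ 2 * h := by
    rw [key]
    have hsingle : ∀ i, x i j * (x i j - 1) ≤ ∑ j, x i j * (x i j - 1) := fun i =>
      Finset.single_le_sum (f := fun j => x i j * (x i j - 1)) (fun j _ => hnn _)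
        (Finset.mem_univ j)
    have hpair : ∑ t ∈ ({i, p} : Finset ℕ), ∑ j, (x t j) * (x t j - 1) ≤
        ∑ t ∈ Finset.range e, ∑ j, (x t j) * (x t j - 1) := by
      apply Finset.sum_le_sum_of_subset_of_nonneg
      · intro t ht
        simp only [Finset.mem_insert, Finset.mem_singleton] at ht
        rcases ht with rfl | rfl <;> simpa
      · intro t _ _
        exact Finset.sum_nonneg fun j _ => hnn _
    rw [Finset.sum_pair hip] at hpair
    have := hsingle i
    have := hsingle p
    linarith
  have hx1 := hnn (x i j + 1)
  have hx2 := hnn (x p j - 1)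
  have hfin : x p j - x i j - 1 ≤ h := by nlinarith
  simp only [hx] at hfin
  linarith

lemma Kconst_attained {e r : ℕ} (he : 2 ≤ e) (hr : 0 < r) (a : Fin r → ℤ)
    (i : ℕ) (hi : i < e) (m : Multipartition r) (hm : IsMulticore e a m)
    (hK : 0 ≤ Kconst e a m i) :
    ∃ a' b, IsBaseTuple e a m a' b ∧ Kconst e a m i =
      b i - b (if i = 0 then e - 1 else i - 1) - (if i = 0 then 2 else 1) := by
  set p : ℕ := if i = 0 then e - 1 else i - 1 with hp
  have hpe : p < e := by rw [hp]; split_ifs <;> omega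
  set S1 : Set ℤ := {x : ℤ | ∃ a' bt, IsBaseTuple e a m a' bt ∧ bt i = x} with hS1
  set S2 : Set ℤ := {x : ℤ | ∃ a' bt, IsBaseTuple e a m a' bt ∧ bt i = sSup S1 ∧ bt p = x}
    with hS2
  have hKe : Kconst e a m i = sSup S1 - sInf S2 - (if i = 0 then 2 else 1) := rfl
  by_cases hne : S2.Nonempty
  · have hbdd : BddBelow S2 := by
      refine ⟨sSup S1 - level e (a ⟨0, hr⟩) (m ⟨0, hr⟩) i
        + level e (a ⟨0, hr⟩) (m ⟨0, hr⟩) p - 1, ?_⟩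
      rintro x ⟨a', bt, ⟨hd, hl⟩, h1, rfl⟩
      obtain ⟨s, hs⟩ := hd ⟨0, hr⟩
      have l1 := hl i hi ⟨0, hr⟩
      have l2 := hl p hpe ⟨0, hr⟩
      rw [show a' ⟨0, hr⟩ = a ⟨0, hr⟩ + e * s by linarith, level_shift he _ _ _ (hm _)] at l1 l2
      omega
    obtain ⟨a', bt, hbt, h1, h2⟩ := Int.csInf_mem hne hbdd
    exact ⟨a', bt, hbt, by rw [hKe, h1, h2]⟩
  · exfalso
    have hS2e : S2 = ∅ := Set.not_nonempty_iff_eq_empty.1 hne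
    have hS10 : sSup S1 = 0 := by
      by_cases h1 : S1.Nonempty ∧ BddAbove S1
      · exfalso
        obtain ⟨a', bt, hbt, hx⟩ := Int.csSup_mem h1.1 h1.2
        exact hne ⟨_, a', bt, hbt, hx, rfl⟩
      · rcases not_and_or.1 h1 with h1 | h1
        · rw [Set.not_nonempty_iff_eq_empty.1 h1, Int.csSup_empty]
        · exact Int.csSup_of_not_bddAbove h1
    rw [hKe, hS10, hS2e, Int.csInf_empty] at hK
    split_ifs at hK <;> omega

/-- Proposition 4.8: fix `ī ∈ {0,…,e−1}`, let `C` be a core block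
(given by a multicore `mu0` of minimal weight in its hub class) and `K = K_ī(C)`.
If `m` is a multicore with core block `C` and `w(m) = w(C) + h·r` with
`0 ≤ h ≤ K`, then `d_ī(m) ≥ K − h`. -/
theorem stmt_7 {e r : ℕ} (he : 2 ≤ e) (hr : 0 < r) (a : Fin r → ℤ)
    (ibar : ℕ) (hibar : ibar < e)
    (mu0 : Multipartition r) (hmu0core : IsMulticore e a mu0)
    (hmu0min : MinimalWeight e a mu0)
    (m : Multipartition r) (hcore : IsMulticore e a m)
    (hsame : SameHub e a m mu0)
    (h : ℤ) (hh0 : 0 ≤ h) (hhK : h ≤ Kconst e a mu0 ibar)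
    (hw : weight e a m = weight e a mu0 + (h : ℚ) * (r : ℚ)) :
    dmin e a m (ibar : ℤ) ≥ Kconst e a mu0 ibar - h := by
  obtain ⟨a', b, hb, hKe⟩ := Kconst_attained he hr a ibar hibar mu0 hmu0core (by omega)
  apply dmin_ge hr
  intro j
  rw [delta_eq he a m hcore]
  have := main_bound he hr a ibar (if ibar = 0 then e - 1 else ibar - 1) hibar
    (by split_ifs <;> omega) (by split_ifs <;> omega) m mu0 hcore hmu0core hsame h hw a' b hb j
  unfold pl
  split_ifs at * <;> omega

end AK
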